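/- Let R be a ring and let {U_i : i ∈ I} and {V_j : j ∈ J} be two families of nonzero uniserial right R-modules. If there exist bijections σ, τ : I → J such that U_i and V_{σ(i)} belong to the same monogeny class and U_i and V_{τ(i)} belong to the same epigeny class for every i ∈ I, then the direct products ∏_{i∈I} U_i and ∏_{j∈J} V_j are isomorphic right R-modules. -/

import Mathlib

/-- Two modules belong to the same monogeny class if there are injective homomorphisms
in both directions. -/
def SameMonogenyClass (R : Type*) [Ring R] (M N : Type*) [AddCommGroup M] [Module R M]
    [AddCommGroup N] [Module R N] : Prop :=
  (∃ f : M →ₗ[R] N, Function.Injective f) ∧ ∃ g : N →ₗ[R] M, Function.Injective g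

/-- Two modules belong to the same epigeny class if there are surjective homomorphisms
in both directions. -/
def SameEpigenyClass (R : Type*) [Ring R] (M N : Type*) [AddCommGroup M] [Module R M]
    [AddCommGroup N] [Module R N] : Prop :=
  (∃ f : M →ₗ[R] N, Function.Surjective f) ∧ ∃ g : N →ₗ[R] M, Function.Surjective g

/-- A module is uniserial if its lattice of submodules is linearly ordered by inclusion. -/
def IsUniserialModule (R : Type*) [Ring R] (M : Type*) [AddCommGroup M] [Module R M] : Prop :=
  ∀ N P : Submodule R M, N ≤ P ∨ P ≤ N

section UniserialModules

variable {R : Type*} [Ring R]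
variable {M N P A B C D : Type*}
variable [AddCommGroup M] [Module R M] [AddCommGroup N] [Module R N] [AddCommGroup P] [Module R P]
variable [AddCommGroup A] [Module R A] [AddCommGroup B] [Module R B]
variable [AddCommGroup C] [Module R C] [AddCommGroup D] [Module R D]

theorem SameMonogenyClass.symm (h : SameMonogenyClass R M N) : SameMonogenyClass R N M :=
  ⟨h.2, h.1⟩

theorem SameMonogenyClass.trans (h : SameMonogenyClass R M N) (h' : SameMonogenyClass R N P) :
    SameMonogenyClass R M P := by
  obtain ⟨⟨f, hf⟩, g, hg⟩ := h
  obtain ⟨⟨f', hf'⟩, g', hg'⟩ := h'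
  exact ⟨⟨f' ∘ₗ f, hf'.comp hf⟩, g ∘ₗ g', hg.comp hg'⟩

theorem SameEpigenyClass.symm (h : SameEpigenyClass R M N) : SameEpigenyClass R N M :=
  ⟨h.2, h.1⟩

theorem SameEpigenyClass.trans (h : SameEpigenyClass R M N) (h' : SameEpigenyClass R N P) :
    SameEpigenyClass R M P := by
  obtain ⟨⟨f, hf⟩, g, hg⟩ := h
  obtain ⟨⟨f', hf'⟩, g', hg'⟩ := h'
  exact ⟨⟨f' ∘ₗ f, hf'.comp hf⟩, g ∘ₗ g', hg.comp hg'⟩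

theorem LinearEquiv.sameMonogenyClass (e : M ≃ₗ[R] N) : SameMonogenyClass R M N :=
  ⟨⟨e, e.injective⟩, e.symm, e.symm.injective⟩

theorem LinearEquiv.sameEpigenyClass (e : M ≃ₗ[R] N) : SameEpigenyClass R M N :=
  ⟨⟨e, e.surjective⟩, e.symm, e.symm.surjective⟩

theorem SameMonogenyClass.nontrivial [Nontrivial M] (h : SameMonogenyClass R M N) :
    Nontrivial N :=
  let ⟨_, hf⟩ := h.1
  hf.nontrivial

theorem SameMonogenyClass.exists_submodule (h : SameMonogenyClass R M N) :
    ∃ X : Submodule R N, SameMonogenyClass R X N ∧ SameEpigenyClass R X M := by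
  obtain ⟨f, hf⟩ := h.1
  have e : M ≃ₗ[R] LinearMap.range f := .ofInjective f hf
  exact ⟨_, e.symm.sameMonogenyClass.trans h, e.symm.sameEpigenyClass⟩

namespace IsUniserialModule

theorem of_injective (hN : IsUniserialModule R N) (f : M →ₗ[R] N) (hf : Function.Injective f) :
    IsUniserialModule R M := fun S T => by
  rcases hN (S.map f) (T.map f) with h | h
  · exact Or.inl ((Submodule.map_le_map_iff_of_injective hf _ _).1 h)
  · exact Or.inr ((Submodule.map_le_map_iff_of_injective hf _ _).1 h)

theorem eq_bot_or_eq_bot (hM : IsUniserialModule R M) {S T : Submodule R M} (h : S ⊓ T = ⊥) :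
    S = ⊥ ∨ T = ⊥ := by
  rcases hM S T with h' | h'
  · exact Or.inl (by rwa [inf_eq_left.2 h'] at h)
  · exact Or.inr (by rwa [inf_eq_right.2 h'] at h)

theorem eq_top_or_eq_top (hM : IsUniserialModule R M) {S T : Submodule R M} (h : S ⊔ T = ⊤) :
    S = ⊤ ∨ T = ⊤ := by
  rcases hM S T with h' | h'
  · exact Or.inr (by rwa [sup_eq_right.2 h'] at h)
  · exact Or.inl (by rwa [sup_eq_left.2 h'] at h)

theorem injective_or_injective_of_add (hM : IsUniserialModule R M) {f g : M →ₗ[R] N}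
    (h : Function.Injective (f + g)) : Function.Injective f ∨ Function.Injective g := by
  simp only [← LinearMap.ker_eq_bot] at h ⊢
  refine hM.eq_bot_or_eq_bot (eq_bot_iff.2 fun x hx => ?_)
  rw [← h, LinearMap.mem_ker, LinearMap.add_apply, LinearMap.mem_ker.1 hx.1,
    LinearMap.mem_ker.1 hx.2, add_zero]

theorem surjective_or_surjective_of_add (hN : IsUniserialModule R N) {f g : M →ₗ[R] N}
    (h : Function.Surjective (f + g)) : Function.Surjective f ∨ Function.Surjective g := by
  simp only [← LinearMap.range_eq_top]
  refine hN.eq_top_or_eq_top (eq_top_iff.2 fun y _ => ?_)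
  obtain ⟨x, rfl⟩ := h y
  exact Submodule.add_mem_sup ⟨x, rfl⟩ ⟨x, rfl⟩

theorem bijective_add (hM : IsUniserialModule R M) (hN : IsUniserialModule R N)
    {f g : M →ₗ[R] N} (hf : Function.Injective f) (hf' : ¬ Function.Surjective f)
    (hg : Function.Surjective g) (hg' : ¬ Function.Injective g) :
    Function.Bijective (f + g) := by
  constructor
  · have h : Function.Injective ((f + g) + (-g)) := by simpa using hf
    refine (hM.injective_or_injective_of_add h).resolve_right fun h => hg' ?_
    exact fun x y hxy => h (by simp [hxy])
  · have h : Function.Surjective ((f + g) + (-f)) := by simpa using hg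
    refine (hN.surjective_or_surjective_of_add h).resolve_right fun h => hf' fun y => ?_
    obtain ⟨x, hx⟩ := h (-y)
    exact ⟨x, by simpa using hx⟩

theorem injective_of_comp (hN : IsUniserialModule R N) [Nontrivial M] {f : M →ₗ[R] N}
    {g : N →ₗ[R] P} (h : Function.Injective (g ∘ₗ f)) : Function.Injective g := by
  have hf : Function.Injective f := Function.Injective.of_comp (f := g) h
  rw [← LinearMap.ker_eq_bot]
  refine (hN.eq_bot_or_eq_bot (S := LinearMap.range f) (eq_bot_iff.2 ?_)).resolve_left ?_
  · rintro _ ⟨⟨x, rfl⟩, hx⟩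
    have : x = 0 := h (by simpa using hx)
    simp [this]
  · intro h0
    obtain ⟨x, hx⟩ := exists_ne (0 : M)
    exact hx (hf (by simpa using (LinearMap.range_eq_bot.1 h0 ▸ rfl : f x = 0)))

theorem surjective_of_comp (hN : IsUniserialModule R N) [Nontrivial P] {f : M →ₗ[R] N}
    {g : N →ₗ[R] P} (h : Function.Surjective (g ∘ₗ f)) : Function.Surjective f := by
  have hg : Function.Surjective g := Function.Surjective.of_comp (g := f) h
  rw [← LinearMap.range_eq_top]
  refine (hN.eq_top_or_eq_top (T := LinearMap.ker g) (eq_top_iff.2 fun y _ => ?_)).resolve_right ?_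
  · obtain ⟨x, hx⟩ := h (g y)
    have hx : g (f x) = g y := hx
    rw [← add_sub_cancel (f x) y]
    exact Submodule.add_mem_sup ⟨x, rfl⟩ (by simp [hx])
  · intro h0
    obtain ⟨z, hz⟩ := exists_ne (0 : P)
    obtain ⟨y, rfl⟩ := hg z
    exact hz (LinearMap.mem_ker.1 (h0 ▸ Submodule.mem_top))

/-- Uniserial modules in the same monogeny class and in the same epigeny class are isomorphic. -/
theorem nonempty_linearEquiv (hM : IsUniserialModule R M) (hN : IsUniserialModule R N)
    (hm : SameMonogenyClass R M N) (he : SameEpigenyClass R M N) : Nonempty (M ≃ₗ[R] N) := by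
  obtain ⟨f, hf⟩ := hm.1
  obtain ⟨g, hg⟩ := he.1
  by_cases hf' : Function.Surjective f
  · exact ⟨.ofBijective f ⟨hf, hf'⟩⟩
  by_cases hg' : Function.Injective g
  · exact ⟨.ofBijective g ⟨hg', hg⟩⟩
  exact ⟨.ofBijective (f + g) (hM.bijective_add hN hf hf' hg hg')⟩

/-- If `C` has the monogeny class of `A` and the epigeny class of `B`, then `C` has a complement
in `A × B` with the monogeny class of `B` and the epigeny class of `A`, realized inside `B`. -/
theorem exists_complement [Nontrivial A] [Nontrivial B]
    (hA : IsUniserialModule R A) (hB : IsUniserialModule R B) (hC : IsUniserialModule R C)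
    (hm : SameMonogenyClass R C A) (he : SameEpigenyClass R C B) :
    ∃ X : Submodule R B, SameMonogenyClass R X B ∧ SameEpigenyClass R X A ∧
      Nonempty ((A × B) ≃ₗ[R] (C × X)) := by
  have : Nontrivial C := hm.symm.nontrivial
  obtain ⟨⟨f, hf⟩, f', hf'⟩ := id hm
  obtain ⟨⟨g, hg⟩, g', hg'⟩ := id he
  by_cases hfs : Function.Surjective (f' ∘ₗ f)
  · have e : A ≃ₗ[R] C :=
      .ofBijective f' ⟨hf', Function.Surjective.of_comp (g := f) hfs⟩
    have t : B ≃ₗ[R] (⊤ : Submodule R B) := Submodule.topEquiv.symm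
    exact ⟨⊤, t.symm.sameMonogenyClass,
      t.symm.sameEpigenyClass.trans (he.symm.trans e.symm.sameEpigenyClass),
      ⟨e.prodCongr t⟩⟩
  by_cases hgi : Function.Injective (g' ∘ₗ g)
  · have e : C ≃ₗ[R] B :=
      .ofBijective g ⟨Function.Injective.of_comp (f := g') hgi, hg⟩
    have hinj : Function.Injective (e.toLinearMap ∘ₗ f') := e.injective.comp hf'
    have t : A ≃ₗ[R] LinearMap.range (e.toLinearMap ∘ₗ f') := .ofInjective _ hinj
    exact ⟨_, t.symm.sameMonogenyClass.trans (hm.symm.trans e.sameMonogenyClass),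
      t.symm.sameEpigenyClass,
      ⟨(LinearEquiv.prodComm R A B).trans (e.symm.prodCongr t)⟩⟩
  have hθ := hC.bijective_add hC (f := f' ∘ₗ f) (g := g' ∘ₗ g)
    (hf'.comp hf) hfs (hg'.comp hg) hgi
  let θ : C ≃ₗ[R] C := .ofBijective _ hθ
  have hθa (c : C) : f' (f (θ.symm c)) + g' (g (θ.symm c)) = c := θ.apply_symm_apply c
  have hθb (c : C) : θ.symm (f' (f c) + g' (g c)) = c := θ.symm_apply_apply c
  let X : Submodule R B := (LinearMap.range f').comap g'
  let φ : A ≃ₗ[R] LinearMap.range f' := .ofInjective f' hf'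
  let q : X →ₗ[R] A :=
    -(φ.symm.toLinearMap ∘ₗ (g'.restrict (p := X) (q := LinearMap.range f') fun _ h => h))
  have hq (x : X) : f' (q x) = -g' x := by
    have : f' (φ.symm ⟨g' x, x.2⟩) = g' x := congrArg Subtype.val (φ.apply_symm_apply ⟨g' x, x.2⟩)
    simp only [q, LinearMap.neg_apply, map_neg]
    exact congrArg Neg.neg this
  let T : A × B →ₗ[R] C := θ.symm.toLinearMap ∘ₗ f'.coprod g'
  have hT (p : A × B) : T p = θ.symm (f' p.1 + g' p.2) := rfl
  have hT' (p : A × B) : f' (f (T p)) + g' (g (T p)) = f' p.1 + g' p.2 := hθa _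
  let r : A × B →ₗ[R] X := (LinearMap.snd R A B - g ∘ₗ T).codRestrict X fun p => by
    refine ⟨f (T p) - p.1, ?_⟩
    simp only [LinearMap.sub_apply, LinearMap.snd_apply, LinearMap.comp_apply, map_sub]
    rw [sub_eq_sub_iff_add_eq_add, hT', add_comm]
  have hr (p : A × B) : (r p : B) = p.2 - g (T p) := rfl
  have hqr (p : A × B) : q (r p) = p.1 - f (T p) := hf' (by
    rw [hq, hr, map_sub, map_sub, neg_sub, sub_eq_sub_iff_add_eq_add, add_comm, hT'])
  let e : (A × B) ≃ₗ[R] (C × X) := .ofLinearMap (T.prod r)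
    ((f.prod g).coprod (q.prod X.subtype))
    (by
      refine LinearMap.ext fun ⟨c, x⟩ => ?_
      have h1 : T (f c + q x, g c + x) = c := by
        have h2 : f' (f c + q x) + g' (g c + x) = f' (f c) + g' (g c) := by
          rw [map_add, map_add, hq]
          abel
        rw [hT, h2, hθb]
      exact Prod.ext h1 (Subtype.ext (by
        change g c + (x : B) - g (T (f c + q x, g c + x)) = x
        rw [h1, add_sub_cancel_left])))
    (by
      refine LinearMap.ext fun p => Prod.ext ?_ ?_
      · change f (T p) + q (r p) = p.1
        rw [hqr, add_sub_cancel]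
      · change g (T p) + (r p : B) = p.2
        rw [hr, add_sub_cancel])
  have hX : IsUniserialModule R X := hB.of_injective X.subtype X.injective_subtype
  have hrB : Function.Injective (X.subtype ∘ₗ r ∘ₗ LinearMap.inr R A B) := by
    have h : Function.Injective ((X.subtype ∘ₗ r ∘ₗ LinearMap.inr R A B) +
        g ∘ₗ θ.symm.toLinearMap ∘ₗ g') := by
      convert Function.injective_id (α := B) using 1
      ext b
      simp [hr, hT]
    refine (hB.injective_or_injective_of_add h).resolve_right fun h => hgi ?_
    have h1 : Function.Injective g := hC.injective_of_comp h
    have h2 : Function.Injective g' :=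
      Function.Injective.of_comp (f := θ.symm)
        (Function.Injective.of_comp (f := g) h)
    exact h2.comp h1
  have hrA : Function.Surjective (q ∘ₗ r ∘ₗ LinearMap.inl R A B) := by
    have h : Function.Surjective ((q ∘ₗ r ∘ₗ LinearMap.inl R A B) +
        f ∘ₗ θ.symm.toLinearMap ∘ₗ f') := by
      convert Function.surjective_id (α := A) using 1
      ext a
      simp [hqr, hT]
    refine (hA.surjective_or_surjective_of_add h).resolve_right fun h => hfs ?_
    have h1 : Function.Surjective f := Function.Surjective.of_comp (g := θ.symm ∘ f') h
    have h2 : Function.Surjective (θ.symm.toLinearMap ∘ₗ f') := hC.surjective_of_comp h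
    have h3 : Function.Surjective f' := fun c => by
      obtain ⟨a, ha⟩ := h2 (θ.symm c)
      exact ⟨a, θ.symm.injective ha⟩
    exact h3.comp h1
  exact ⟨X, ⟨⟨X.subtype, X.injective_subtype⟩, r ∘ₗ LinearMap.inr R A B,
      Function.Injective.of_comp (f := X.subtype) hrB⟩,
    ⟨⟨q, Function.Surjective.of_comp (g := r ∘ₗ LinearMap.inl R A B) hrA⟩,
      r ∘ₗ LinearMap.inl R A B, hX.surjective_of_comp hrA⟩, ⟨e⟩⟩

/-- Exchanging the epigeny classes of two uniserial modules preserves their direct sum. -/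
theorem nonempty_prod_linearEquiv [Nontrivial A] [Nontrivial B]
    (hA : IsUniserialModule R A) (hB : IsUniserialModule R B)
    (hC : IsUniserialModule R C) (hD : IsUniserialModule R D)
    (hCA : SameMonogenyClass R C A) (hCB : SameEpigenyClass R C B)
    (hDB : SameMonogenyClass R D B) (hDA : SameEpigenyClass R D A) :
    Nonempty ((A × B) ≃ₗ[R] (C × D)) := by
  obtain ⟨X, hXB, hXA, ⟨e⟩⟩ := exists_complement hA hB hC hCA hCB
  obtain ⟨d⟩ := (hB.of_injective X.subtype X.injective_subtype).nonempty_linearEquiv hD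
    (hXB.trans hDB.symm) (hXA.trans hDA.symm)
  exact ⟨e.trans ((LinearEquiv.refl R C).prodCongr d)⟩

end IsUniserialModule

end UniserialModules

section Products

variable {R : Type*} [Ring R] {I : Type*}

/-- A direct product decomposes into the products over the fibers of a map of index sets. -/
def piFiberEquiv (R : Type*) [Ring R] {Q : Type*} (p : I → Q) (L : I → Type*)
    [∀ i, AddCommGroup (L i)] [∀ i, Module R (L i)] :
    (∀ i, L i) ≃ₗ[R] (∀ q, ∀ i : {i // p i = q}, L i) where
  toFun x _ i := x i
  invFun y i := y (p i) ⟨i, rfl⟩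
  map_add' _ _ := rfl
  map_smul' _ _ := rfl
  left_inv _ := rfl
  right_inv y := by
    ext q ⟨i, rfl⟩
    rfl

theorem nonempty_pi_linearEquiv_of_fibers {Q : Type*} (p : I → Q) (M N : I → Type*)
    [∀ i, AddCommGroup (M i)] [∀ i, Module R (M i)]
    [∀ i, AddCommGroup (N i)] [∀ i, Module R (N i)]
    (h : ∀ k, Nonempty ((∀ i : {i // p i = p k}, M i) ≃ₗ[R] (∀ i : {i // p i = p k}, N i))) :
    Nonempty ((∀ i, M i) ≃ₗ[R] (∀ i, N i)) := by
  have h' (q : Q) :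
      Nonempty ((∀ i : {i // p i = q}, M i) ≃ₗ[R] (∀ i : {i // p i = q}, N i)) := by
    by_cases hq : ∃ k, p k = q
    · obtain ⟨k, rfl⟩ := hq
      exact h k
    · have : IsEmpty {i // p i = q} := ⟨fun i => hq ⟨i, i.2⟩⟩
      exact ⟨0⟩
  exact ⟨(piFiberEquiv R p M).trans ((LinearEquiv.piCongrRight fun q => (h' q).some).trans (piFiberEquiv R p N).symm)⟩

theorem nonempty_pi_linearEquiv_prod {K : Type*} (M : K → Type*)
    [∀ i, AddCommGroup (M i)] [∀ i, Module R (M i)] {a b : K} (hab : a ≠ b)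
    (h : ∀ k, k = a ∨ k = b) : Nonempty ((∀ k, M k) ≃ₗ[R] (M a × M b)) := by
  classical
  refine ⟨.ofBijective ((LinearMap.proj a).prod (LinearMap.proj b)) ⟨fun x y hxy => ?_, ?_⟩⟩
  · obtain ⟨h1, h2⟩ := Prod.ext_iff.1 hxy
    ext k
    rcases h k with rfl | rfl
    · exact h1
    · exact h2
  · rintro ⟨x, y⟩
    exact ⟨Pi.single a x + Pi.single b y, by simp [hab, hab.symm]⟩

/-- Exchanging epigeny classes along an involution preserves the direct product. -/
theorem nonempty_pi_linearEquiv_of_involutive (M N : I → Type*)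
    [∀ i, AddCommGroup (M i)] [∀ i, Module R (M i)]
    [∀ i, AddCommGroup (N i)] [∀ i, Module R (N i)] [∀ i, Nontrivial (M i)]
    (hM : ∀ i, IsUniserialModule R (M i)) (hN : ∀ i, IsUniserialModule R (N i))
    (β : I → I) (hβ : Function.Involutive β)
    (hm : ∀ i, SameMonogenyClass R (N i) (M i))
    (he : ∀ i, SameEpigenyClass R (N i) (M (β i))) :
    Nonempty ((∀ i, M i) ≃ₗ[R] (∀ i, N i)) := by
  refine nonempty_pi_linearEquiv_of_fibers (fun i => s(i, β i)) M N fun k => ?_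
  have hfib (i : {i // s(i, β i) = s(k, β k)}) :
      i = ⟨k, rfl⟩ ∨ i = ⟨β k, by rw [hβ k, Sym2.eq_swap]⟩ := by
    obtain ⟨i, hi⟩ := i
    rcases Sym2.eq_iff.1 hi with h | h
    · exact Or.inl (Subtype.ext h.1)
    · exact Or.inr (Subtype.ext h.1)
  by_cases hk : β k = k
  · have : Unique {i // s(i, β i) = s(k, β k)} :=
      { default := ⟨k, rfl⟩
        uniq := fun i => (hfib i).elim id fun h => h.trans (Subtype.ext hk) }
    have hek : ∀ i, β i = i → SameEpigenyClass R (N i) (M i) := fun i hi => by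
      have := he i
      rwa [hi] at this
    refine ⟨LinearEquiv.piCongrRight fun i => Classical.choice ?_⟩
    refine (hM i).nonempty_linearEquiv (hN i) (hm i).symm (hek i ?_).symm
    rcases hfib i with rfl | rfl
    · exact hk
    · exact congrArg β hk
  · have hne : (⟨k, rfl⟩ : {i // s(i, β i) = s(k, β k)}) ≠
        ⟨β k, by rw [hβ k, Sym2.eq_swap]⟩ := fun h => hk (congrArg Subtype.val h).symm
    obtain ⟨eM⟩ := nonempty_pi_linearEquiv_prod (R := R)
      (fun i : {i // s(i, β i) = s(k, β k)} => M i) hne hfib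
    obtain ⟨eN⟩ := nonempty_pi_linearEquiv_prod (R := R)
      (fun i : {i // s(i, β i) = s(k, β k)} => N i) hne hfib
    have hek := he (β k)
    rw [hβ k] at hek
    obtain ⟨e⟩ := IsUniserialModule.nonempty_prod_linearEquiv (hM k) (hM (β k)) (hN k) (hN (β k))
      (hm k) (he k) (hm (β k)) hek
    exact ⟨eM.trans (e.trans eN.symm)⟩

/-- Every permutation becomes an involution after composition with a suitable involution that
preserves its cycles. -/
theorem Equiv.Perm.exists_involutive_comp (π : Equiv.Perm I) :
    ∃ β : I → I, Function.Involutive β ∧ Function.Involutive (β ∘ π) ∧ ∀ i, π.SameCycle i (β i) := by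
  let r (i : I) : I := (Quotient.mk (SameCycle.setoid π) i).out
  have hr (i : I) : π.SameCycle (r i) i :=
    Quotient.exact (Quotient.out_eq (Quotient.mk (SameCycle.setoid π) i))
  have hr' {i j : I} (h : π.SameCycle i j) : r i = r j :=
    congrArg Quotient.out (Quotient.sound (s := SameCycle.setoid π) h)
  choose n hn using hr
  let β (i : I) : I := (π ^ (-n i)) (r i)
  have hβ (m : ℤ) (i : I) : β ((π ^ m) (r i)) = (π ^ (-m)) (r i) := by
    have h1 : r ((π ^ m) (r i)) = r i := hr' (SameCycle.trans ⟨-m, by simp⟩ ⟨n i, hn i⟩)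
    have h2 := hn ((π ^ m) (r i))
    simp only [β]
    rw [h1] at h2 ⊢
    generalize n ((π ^ m) (r i)) = l at h2
    generalize r i = x at h2
    have h3 : (π ^ (-l)) ((π ^ (-m)) ((π ^ l) x)) = (π ^ (-l)) ((π ^ (-m)) ((π ^ m) x)) := by
      rw [h2]
    simp only [← Equiv.Perm.mul_apply, ← zpow_add] at h3
    rw [show -l + (-m + l) = -m by ring, show -l + (-m + m) = -l by ring] at h3
    exact h3.symm
  have hc (i : I) : π.SameCycle i (β i) :=
    SameCycle.trans (SameCycle.symm ⟨n i, hn i⟩) ⟨-n i, rfl⟩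
  clear_value β
  refine ⟨β, fun i => ?_, fun i => ?_, hc⟩
  · rw [← hn i, hβ (n i) i, hβ (-n i) i, neg_neg]
  · rw [← hn i]
    simp only [Function.comp_apply]
    rw [← Equiv.Perm.mul_apply, ← zpow_one_add, hβ (1 + n i) i, ← Equiv.Perm.mul_apply,
      ← zpow_one_add, hβ (1 + -(1 + n i)) i]
    congr 2
    ring

/-- Along a cycle of the permutation that matches the epigeny classes of `U` with those of `V`,
every monogeny class of `V` occurs together with every epigeny class of `V`. -/
theorem exists_submodule_of_sameCycle (U V : I → Type*)
    [∀ i, AddCommGroup (U i)] [∀ i, Module R (U i)]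
    [∀ i, AddCommGroup (V i)] [∀ i, Module R (V i)] [∀ i, Nontrivial (V i)]
    (hU : ∀ i, IsUniserialModule R (U i)) (hV : ∀ i, IsUniserialModule R (V i))
    (π : Equiv.Perm I) (hm : ∀ i, SameMonogenyClass R (U i) (V i))
    (he : ∀ i, SameEpigenyClass R (U i) (V (π i))) {i j : I} (hij : π.SameCycle i j) :
    ∃ X : Submodule R (V i), SameMonogenyClass R X (V i) ∧ SameEpigenyClass R X (V j) := by
  have key (n : ℤ) : ∃ X : Submodule R (V i), SameMonogenyClass R X (V i) ∧
      SameEpigenyClass R X (V ((π ^ n) i)) := by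
    have hUn (k : I) : Nontrivial (U k) := (hm k).symm.nontrivial
    induction n using Int.induction_on with
    | zero =>
      exact ⟨⊤, Submodule.topEquiv.sameMonogenyClass, Submodule.topEquiv.sameEpigenyClass⟩
    | succ n ih =>
      obtain ⟨X, hX, hX'⟩ := ih
      rw [add_comm, zpow_one_add, Equiv.Perm.mul_apply]
      generalize (π ^ (n : ℤ)) i = k at hX'
      have : Nontrivial X := hX.symm.nontrivial
      obtain ⟨Y, hY, hY', -⟩ := IsUniserialModule.exists_complement (hU k)
        ((hV i).of_injective X.subtype X.injective_subtype) (hV k) (hm k).symm hX'.symm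
      obtain ⟨Z, hZ, hZ'⟩ := (hY.trans hX).exists_submodule
      exact ⟨Z, hZ, hZ'.trans (hY'.trans (he k))⟩
    | pred n ih =>
      obtain ⟨X, hX, hX'⟩ := ih
      have hk : (π ^ (-(n : ℤ))) i = π ((π ^ (-(n : ℤ) - 1)) i) := by
        rw [← Equiv.Perm.mul_apply, ← zpow_one_add, add_sub_cancel]
      rw [hk] at hX'
      generalize (π ^ (-(n : ℤ) - 1)) i = k at hX'
      have : Nontrivial X := hX.symm.nontrivial
      obtain ⟨Y, hY, hY', -⟩ := IsUniserialModule.exists_complement (hV k)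
        ((hV i).of_injective X.subtype X.injective_subtype) (hU k) (hm k) ((he k).trans hX'.symm)
      obtain ⟨Z, hZ, hZ'⟩ := (hY.trans hX).exists_submodule
      exact ⟨Z, hZ, hZ'.trans hY'⟩
  obtain ⟨n, rfl⟩ := hij
  exact key n

end Products

/-- If two families of nonzero uniserial modules have their monogeny classes and epigeny
classes matched by bijections, then their direct products are isomorphic. -/
theorem direct_products_of_uniserial_isomorphic
    {R : Type*} [Ring R] {I J : Type*}
    (U : I → Type*) (V : J → Type*)
    [∀ i, AddCommGroup (U i)] [∀ i, Module R (U i)]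
    [∀ j, AddCommGroup (V j)] [∀ j, Module R (V j)]
    (hU : ∀ i, IsUniserialModule R (U i)) (hU0 : ∀ i, ∃ x : U i, x ≠ 0)
    (hV : ∀ j, IsUniserialModule R (V j)) (hV0 : ∀ j, ∃ x : V j, x ≠ 0)
    (σ τ : I ≃ J)
    (hm : ∀ i, SameMonogenyClass R (U i) (V (σ i)))
    (he : ∀ i, SameEpigenyClass R (U i) (V (τ i))) :
    Nonempty (((i : I) → U i) ≃ₗ[R] ((j : J) → V j)) := by
  obtain ⟨β, hβ, hβτ, hc⟩ := Equiv.Perm.exists_involutive_comp (τ.trans σ.symm)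
  have hUn (i : I) : Nontrivial (U i) := let ⟨x, hx⟩ := hU0 i; ⟨x, 0, hx⟩
  have hVn (j : J) : Nontrivial (V j) := let ⟨x, hx⟩ := hV0 j; ⟨x, 0, hx⟩
  have he' (i : I) : SameEpigenyClass R (U i) (V (σ ((τ.trans σ.symm) i))) := by
    have h := he i
    rwa [← σ.apply_symm_apply (τ i)] at h
  choose W hWm hWe using fun i => exists_submodule_of_sameCycle U (fun i => V (σ i)) hU
    (fun i => hV (σ i)) (τ.trans σ.symm) hm he' (hc i)
  have hWU (i : I) : IsUniserialModule R (W i) :=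
    (hV (σ i)).of_injective (W i).subtype (W i).injective_subtype
  have hWn (i : I) : Nontrivial (W i) := (hWm i).symm.nontrivial
  obtain ⟨e₁⟩ := nonempty_pi_linearEquiv_of_involutive (fun i => V (σ i)) (fun i => W i)
    (fun i => hV (σ i)) hWU β hβ hWm hWe
  obtain ⟨e₂⟩ := nonempty_pi_linearEquiv_of_involutive (fun i => W i) U hWU hU
    (β ∘ (τ.trans σ.symm)) hβτ (fun i => (hm i).trans (hWm i).symm) fun i => by
      have h := hWe ((β ∘ (τ.trans σ.symm)) i)
      rw [Function.comp_apply, hβ] at h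
      exact (he' i).trans h.symm
  exact ⟨e₂.symm.trans (e₁.symm.trans (LinearEquiv.piCongrLeft R V σ))⟩
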